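/- Let Λ = (λ_i) be a nondecreasing sequence of positive real numbers with ∑ 1/λ_i = +∞, let q = (q(n)) be an increasing sequence of positive reals with q(n) → ∞, and set δ(n) = 2^n. Then the inclusion ΛBV ⊆ BV(q;δ) holds if and only if limsup_{n→∞} max_{1 ≤ k ≤ 2^n} k^{1/q(n)} / (∑_{i=1}^{k} 1/λ_i) < +∞. -/

import Mathlib

open scoped ENNReal
open Filter

/-- A finite family of nonoverlapping subintervals of `[0,1]`, each given as its pair of
endpoints: every interval is nondegenerate, contained in `[0,1]`, and any two of them
have disjoint interiors. -/
def Nonoverlapping (n : ℕ) (I : Fin n → ℝ × ℝ) : Prop :=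
  (∀ i, 0 ≤ (I i).1 ∧ (I i).1 < (I i).2 ∧ (I i).2 ≤ 1) ∧
    ∀ i j, i ≠ j → (I i).2 ≤ (I j).1 ∨ (I j).2 ≤ (I i).1

/-- The `Λ`-variation of `f : [0,1] → ℝ` (Waterman variation), as a value in `ℝ≥0∞`
(`Lam i` plays the role of `λ_{i+1}`). -/
noncomputable def lamVar (Lam : ℕ → ℝ) (f : ℝ → ℝ) : ℝ≥0∞ :=
  ⨆ (n : ℕ) (I : Fin n → ℝ × ℝ) (_ : Nonoverlapping n I),
    ENNReal.ofReal (∑ i, |f (I i).2 - f (I i).1| / Lam i)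

/-- The generalized Wiener variation `V(f, q; δ)`, as a value in `ℝ≥0∞`. -/
noncomputable def wienerVar (q δ : ℕ → ℝ) (f : ℝ → ℝ) : ℝ≥0∞ :=
  ⨆ (n : ℕ) (s : ℕ) (I : Fin s → ℝ × ℝ) (_ : Nonoverlapping s I)
    (_ : ∀ k, 1 / δ n ≤ (I k).2 - (I k).1),
    ENNReal.ofReal ((∑ k, |f (I k).2 - f (I k).1| ^ q n) ^ (1 / q n))

/-!
Since `∑ aᵢ / λᵢ` is bounded by the `Λ`-variation for every ordering of the increments
`aᵢ = |f(Iᵢ)|`, these may be taken nonincreasing. By Minkowski's inequality it then suffices to test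
`(∑ aᵢ ^ p) ^ (1 / p) ≤ C ∑ aᵢ / λᵢ` on the indicators of the initial segments `{1, …, k}`, where it
says `k ^ (1 / p) ≤ C ∑_{i ≤ k} 1 / λᵢ`. As at most `δ(n)` nonoverlapping intervals of length at
least `1 / δ(n)` fit into `[0,1]`, only `k ≤ δ(n)` matter.

Conversely, if the ratios are unbounded, choose `m_j < δ(n_j)` violating the `j`-th bound and let
`f` be a sum of spikes of heights `h_j` at the points `i / m_j`. The heights are small enough for
`f ∈ ΛBV`. Since `1 / δ(n_j) < 1 / m_j`, there are `m_j` admissible intervals whose left endpoints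
are these points and whose right endpoints are irrational, so that `f` vanishes there.
-/

open scoped NNReal
open Finset (range)

/-! ### Partial sums of reciprocals -/

/-- The denominator `∑_{i=1}^k 1/λ_i` of the criterion. -/
noncomputable def recipSum (Lam : ℕ → ℝ) (k : ℕ) : ℝ :=
  ∑ i ∈ range k, 1 / Lam i

/-- The quantity `max_{1 ≤ k ≤ x} k^{1/p} / ∑_{i=1}^k 1/λ_i`, as a supremum in `ℝ≥0∞`; the criterion
evaluates it at `p = q(n)` and `x = δ(n)`. -/
noncomputable def maxRatio (Lam : ℕ → ℝ) (p x : ℝ) : ℝ≥0∞ :=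
  ⨆ (k : ℕ) (_ : 1 ≤ k) (_ : (k : ℝ) ≤ x), ENNReal.ofReal ((k : ℝ) ^ (1 / p) / recipSum Lam k)

lemma sum_le_sum_range_card_of_antitone {M : Type*} [AddCommMonoid M] [PartialOrder M]
    [IsOrderedAddMonoid M] {w : ℕ → M} (hw : Antitone w) (A : Finset ℕ) :
    ∑ i ∈ A, w i ≤ ∑ i ∈ range A.card, w i := by
  induction A using Finset.induction_on_max with
  | empty => simp
  | insert a A hA ih =>
    have ha : a ∉ A := fun h => (hA a h).false
    have hcard : A.card ≤ a := by
      simpa using Finset.card_le_card fun i hi => Finset.mem_range.2 (hA i hi)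
    rw [Finset.sum_insert ha, Finset.card_insert_of_notMem ha, Finset.sum_range_succ, add_comm]
    exact add_le_add ih (hw hcard)

section RecipSum

variable {Lam : ℕ → ℝ}

lemma recipSum_pos (hLpos : ∀ i, 0 < Lam i) {k : ℕ} (hk : 1 ≤ k) : 0 < recipSum Lam k :=
  Finset.sum_pos (fun i _ => one_div_pos.2 (hLpos i)) ⟨0, Finset.mem_range.2 hk⟩

lemma recipSum_mono (hLpos : ∀ i, 0 < Lam i) : Monotone (recipSum Lam) := fun _ _ hkl =>
  Finset.sum_le_sum_of_subset_of_nonneg (Finset.range_mono hkl)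
    fun i _ _ => (one_div_pos.2 (hLpos i)).le

lemma one_le_mul_recipSum (hLpos : ∀ i, 0 < Lam i) {k : ℕ} (hk : 1 ≤ k) :
    1 ≤ Lam 0 * recipSum Lam k :=
  calc 1 = Lam 0 * recipSum Lam 1 := by simp [recipSum, (hLpos 0).ne']
    _ ≤ Lam 0 * recipSum Lam k :=
      mul_le_mul_of_nonneg_left (recipSum_mono hLpos hk) (hLpos 0).le

lemma sum_one_div_le_recipSum_card (hLpos : ∀ i, 0 < Lam i) (hLmono : Monotone Lam)
    (A : Finset ℕ) : ∑ i ∈ A, 1 / Lam i ≤ recipSum Lam A.card :=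
  sum_le_sum_range_card_of_antitone
    (fun _ _ hij => one_div_le_one_div_of_le (hLpos _) (hLmono hij)) A

lemma rpow_le_mul_recipSum_of_maxRatio_le (hLpos : ∀ i, 0 < Lam i) {p x : ℝ} {C : ℝ≥0}
    (hC : maxRatio Lam p x ≤ C) {k : ℕ} (hk : 1 ≤ k) (hkx : (k : ℝ) ≤ x) :
    (k : ℝ) ^ (1 / p) ≤ C * recipSum Lam k := by
  simp only [maxRatio, iSup_le_iff] at hC
  rw [← div_le_iff₀ (recipSum_pos hLpos hk)]
  exact (ENNReal.ofReal_le_iff_le_toReal ENNReal.coe_ne_top).1 (hC k hk hkx)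

/-- Halving `k` makes the index strictly smaller than `x`. The threshold `Lam 0` excludes `k = 1`,
where the ratio equals `Lam 0`. -/
lemma exists_mul_recipSum_le_rpow_of_lt_maxRatio (hLpos : ∀ i, 0 < Lam i) {p x M : ℝ} (hp : 1 ≤ p)
    (hM : 0 ≤ M) (hlt : ENNReal.ofReal (max (2 * M) (Lam 0)) < maxRatio Lam p x) :
    ∃ m : ℕ, 1 ≤ m ∧ (m : ℝ) < x ∧ M * recipSum Lam m ≤ (m : ℝ) ^ (1 / p) := by
  simp only [maxRatio, lt_iSup_iff] at hlt
  obtain ⟨k, hk, hkx, hlt⟩ := hlt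
  have hratio := (ENNReal.ofReal_lt_ofReal_iff_of_nonneg (by positivity)).1 hlt
  obtain ⟨h2M, hLam⟩ := max_lt_iff.1 hratio
  have hk2 : 2 ≤ k := by
    by_contra! hk1
    obtain rfl : k = 1 := by omega
    simp [recipSum] at hLam
  obtain ⟨m, hm1, hmk, hkm⟩ : ∃ m, 1 ≤ m ∧ m < k ∧ k ≤ 2 * m :=
    ⟨(k + 1) / 2, by omega, by omega, by omega⟩
  refine ⟨m, hm1, (Nat.cast_lt.2 hmk).trans_le hkx, ?_⟩
  have hp0 : 0 < p := by linarith
  have htwo : (2 : ℝ) ^ (1 / p) ≤ 2 := by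
    simpa using Real.rpow_le_rpow_of_exponent_le one_le_two ((div_le_one hp0).2 hp)
  have hdouble : 2 * (M * recipSum Lam m) ≤ 2 * (m : ℝ) ^ (1 / p) :=
    calc 2 * (M * recipSum Lam m) = 2 * M * recipSum Lam m := by ring
      _ ≤ 2 * M * recipSum Lam k := by gcongr; exact recipSum_mono hLpos hmk.le
      _ ≤ (k : ℝ) ^ (1 / p) := ((lt_div_iff₀ (recipSum_pos hLpos hk)).1 h2M).le
      _ ≤ (2 * m : ℝ) ^ (1 / p) := by gcongr; exact_mod_cast hkm
      _ = 2 ^ (1 / p) * (m : ℝ) ^ (1 / p) := Real.mul_rpow (by norm_num) (by positivity)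
      _ ≤ 2 * (m : ℝ) ^ (1 / p) := by gcongr
  linarith

end RecipSum

/-! ### A weighted inequality for finite sequences -/

lemma sum_const_rpow_rpow_one_div {ι : Type*} [Fintype ι] {p c : ℝ} (hp : p ≠ 0) (hc : 0 ≤ c) :
    (∑ _i : ι, c ^ p) ^ (1 / p) = (Fintype.card ι : ℝ) ^ (1 / p) * c := by
  rw [Finset.sum_const, Finset.card_univ, nsmul_eq_mul,
    Real.mul_rpow (by positivity) (by positivity), one_div, Real.rpow_rpow_inv hc hp]

/-- Induction on the length: subtracting the last term from every term leaves a shorter sequence and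
a constant one, to which the hypothesis with `k = s` applies. -/
lemma lp_le_mul_sum_of_antitone {w : ℕ → ℝ} {p C : ℝ} (hp : 1 ≤ p) {s : ℕ}
    (hC : ∀ k : ℕ, 1 ≤ k → k ≤ s → (k : ℝ) ^ (1 / p) ≤ C * ∑ i ∈ range k, w i)
    {b : Fin s → ℝ} (hb : Antitone b) (hb0 : ∀ i, 0 ≤ b i) :
    (∑ i, b i ^ p) ^ (1 / p) ≤ C * ∑ i, b i * w i := by
  have hp0 : p ≠ 0 := by linarith
  induction s with
  | zero => simp [hp0]
  | succ s ih =>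
    set c := b (Fin.last s)
    have hc : ∀ i, 0 ≤ b i - c := fun i => sub_nonneg.2 (hb (Fin.le_last i))
    have hshort : (∑ i, (b i - c) ^ p) ^ (1 / p) ≤ C * ∑ i : Fin s, (b i.castSucc - c) * w i := by
      rw [Fin.sum_univ_castSucc, sub_self, Real.zero_rpow hp0, add_zero]
      exact ih (fun k hk hks => hC k hk (hks.trans s.le_succ))
        (fun i j hij => sub_le_sub_right (hb (Fin.castSucc_le_castSucc_iff.2 hij)) c)
        (fun i => hc _)
    have hconst : (∑ _i : Fin (s + 1), c ^ p) ^ (1 / p) ≤ C * (∑ i ∈ range (s + 1), w i) * c := by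
      rw [sum_const_rpow_rpow_one_div hp0 (hb0 _), Fintype.card_fin]
      exact mul_le_mul_of_nonneg_right (hC (s + 1) s.succ_pos le_rfl) (hb0 _)
    calc (∑ i, b i ^ p) ^ (1 / p) = (∑ i, (b i - c + c) ^ p) ^ (1 / p) := by simp
      _ ≤ (∑ i, (b i - c) ^ p) ^ (1 / p) + (∑ _i : Fin (s + 1), c ^ p) ^ (1 / p) :=
        Real.Lp_add_le_of_nonneg _ hp (fun i _ => hc i) fun _ _ => hb0 _
      _ ≤ C * ∑ i : Fin s, (b i.castSucc - c) * w i + C * (∑ i ∈ range (s + 1), w i) * c :=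
        add_le_add hshort hconst
      _ = C * ∑ i, b i * w i := by
        rw [Fin.sum_univ_castSucc, Finset.sum_range_succ, ← Fin.sum_univ_eq_sum_range]
        simp only [sub_mul, Finset.sum_sub_distrib, ← Finset.mul_sum, Fin.val_castSucc,
          Fin.val_last]
        ring

lemma exists_perm_antitone_comp {α : Type*} [LinearOrder α] {s : ℕ} (a : Fin s → α) :
    ∃ σ : Equiv.Perm (Fin s), Antitone (a ∘ σ) :=
  ⟨Tuple.sort (OrderDual.toDual ∘ a), Tuple.monotone_sort (OrderDual.toDual ∘ a)⟩

lemma exists_perm_lp_le_mul_sum {w : ℕ → ℝ} {p C : ℝ} (hp : 1 ≤ p) {s : ℕ}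
    (hC : ∀ k : ℕ, 1 ≤ k → k ≤ s → (k : ℝ) ^ (1 / p) ≤ C * ∑ i ∈ range k, w i)
    {a : Fin s → ℝ} (ha : ∀ i, 0 ≤ a i) :
    ∃ σ : Equiv.Perm (Fin s), (∑ i, a i ^ p) ^ (1 / p) ≤ C * ∑ i, a (σ i) * w i := by
  obtain ⟨σ, hσ⟩ := exists_perm_antitone_comp a
  refine ⟨σ, ?_⟩
  rw [← Equiv.sum_comp σ]
  exact lp_le_mul_sum_of_antitone hp hC hσ fun i => ha (σ i)

/-! ### Nonoverlapping intervals -/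

namespace Nonoverlapping

variable {s : ℕ} {I : Fin s → ℝ × ℝ}

lemma comp_injective (hI : Nonoverlapping s I) {r : ℕ} {g : Fin r → Fin s}
    (hg : Function.Injective g) : Nonoverlapping r (I ∘ g) :=
  ⟨fun i => hI.1 (g i), fun _ _ hij => hI.2 _ _ (hg.ne hij)⟩

lemma injective_fst (hI : Nonoverlapping s I) : Function.Injective fun i => (I i).1 := by
  intro i j (hij : (I i).1 = (I j).1)
  by_contra hne
  have hi := (hI.1 i).2.1
  have hj := (hI.1 j).2.1
  rcases hI.2 i j hne with h | h <;> linarith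

lemma injective_snd (hI : Nonoverlapping s I) : Function.Injective fun i => (I i).2 := by
  intro i j (hij : (I i).2 = (I j).2)
  by_contra hne
  have hi := (hI.1 i).2.1
  have hj := (hI.1 j).2.1
  rcases hI.2 i j hne with h | h <;> linarith

lemma pairwise_disjoint_Ioo (hI : Nonoverlapping s I) :
    Pairwise (Function.onFun Disjoint fun k => Set.Ioo (I k).1 (I k).2) := by
  intro i j hij
  refine Set.disjoint_left.2 fun x hxi hxj => ?_
  rcases hI.2 i j hij with h | h
  · exact (hxi.2.trans_le h).not_gt hxj.1
  · exact (hxj.2.trans_le h).not_gt hxi.1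

open MeasureTheory in
lemma sum_length_le_one (hI : Nonoverlapping s I) : ∑ k, ((I k).2 - (I k).1) ≤ 1 := by
  have hsub : ⋃ k, Set.Ioo (I k).1 (I k).2 ⊆ Set.Icc 0 1 := Set.iUnion_subset fun k _ hx =>
    ⟨(hI.1 k).1.trans hx.1.le, hx.2.le.trans (hI.1 k).2.2⟩
  have hvol := measure_mono (μ := volume) hsub
  rw [measure_iUnion hI.pairwise_disjoint_Ioo fun _ => measurableSet_Ioo, tsum_fintype] at hvol
  simp only [Real.volume_Ioo, Real.volume_Icc, sub_zero] at hvol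
  rwa [← ENNReal.ofReal_sum_of_nonneg fun k _ => sub_nonneg.2 (hI.1 k).2.1.le,
    ENNReal.ofReal_le_ofReal_iff zero_le_one] at hvol

lemma card_le (hI : Nonoverlapping s I) {x : ℝ} (hx : 0 < x)
    (hlen : ∀ k, 1 / x ≤ (I k).2 - (I k).1) : (s : ℝ) ≤ x := by
  have hsum : ∑ _k : Fin s, 1 / x ≤ 1 :=
    (Finset.sum_le_sum fun k _ => hlen k).trans hI.sum_length_le_one
  simpa [← div_eq_mul_inv, div_le_one hx] using hsum

end Nonoverlapping

/-! ### Sufficiency -/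

/-- The variation at a single level of the generalized Wiener class, with exponent `p` and intervals
of length at least `1 / x`; `wienerVar q δ` is its supremum over `p = q(n)`, `x = δ(n)`. -/
noncomputable def wienerVarAt (p x : ℝ) (f : ℝ → ℝ) : ℝ≥0∞ :=
  ⨆ (s : ℕ) (I : Fin s → ℝ × ℝ) (_ : Nonoverlapping s I) (_ : ∀ k, 1 / x ≤ (I k).2 - (I k).1),
    ENNReal.ofReal ((∑ k, |f (I k).2 - f (I k).1| ^ p) ^ (1 / p))

lemma wienerVar_eq_iSup (q δ : ℕ → ℝ) (f : ℝ → ℝ) :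
    wienerVar q δ f = ⨆ n, wienerVarAt (q n) (δ n) f := rfl

section Sufficiency

variable {Lam : ℕ → ℝ} {f : ℝ → ℝ} {s : ℕ} {I : Fin s → ℝ × ℝ} {p x : ℝ}

lemma Nonoverlapping.sum_abs_sub_div_le (hI : Nonoverlapping s I) (hf : lamVar Lam f < ⊤) :
    ∑ i, |f (I i).2 - f (I i).1| / Lam i ≤ (lamVar Lam f).toReal :=
  (ENNReal.ofReal_le_iff_le_toReal hf.ne).1 <|
    le_iSup_of_le s <| le_iSup_of_le I <| le_iSup_of_le hI le_rfl

lemma Nonoverlapping.abs_sub_le (hI : Nonoverlapping s I) (hL0 : 0 < Lam 0)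
    (hf : lamVar Lam f < ⊤) (k : Fin s) :
    |f (I k).2 - f (I k).1| ≤ (lamVar Lam f).toReal * Lam 0 := by
  have hk : Nonoverlapping 1 (I ∘ fun _ => k) :=
    hI.comp_injective (Function.injective_of_subsingleton _)
  simpa [div_le_iff₀ hL0] using hk.sum_abs_sub_div_le hf

lemma wienerVarAt_lt_top (hL0 : 0 < Lam 0) (hf : lamVar Lam f < ⊤) (hp : 0 < p) (hx : 0 < x) :
    wienerVarAt p x f < ⊤ := by
  set D := (lamVar Lam f).toReal * Lam 0
  have hD : 0 ≤ D := by positivity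
  refine lt_of_le_of_lt (b := ENNReal.ofReal (x ^ (1 / p) * D)) ?_ ENNReal.ofReal_lt_top
  refine iSup_le fun s => iSup₂_le fun I hI => iSup_le fun hlen => ENNReal.ofReal_le_ofReal ?_
  calc (∑ k, |f (I k).2 - f (I k).1| ^ p) ^ (1 / p) ≤ (∑ _k : Fin s, D ^ p) ^ (1 / p) := by
        gcongr with k
        exact hI.abs_sub_le hL0 hf k
    _ = (s : ℝ) ^ (1 / p) * D := by rw [sum_const_rpow_rpow_one_div hp.ne' hD, Fintype.card_fin]
    _ ≤ x ^ (1 / p) * D := by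
        gcongr
        exact hI.card_le hx hlen

lemma wienerVarAt_le_mul_lamVar (hLpos : ∀ i, 0 < Lam i) (hf : lamVar Lam f < ⊤) (hp : 1 ≤ p)
    (hx : 0 < x) {C : ℝ≥0} (hC : maxRatio Lam p x ≤ C) :
    wienerVarAt p x f ≤ C * lamVar Lam f := by
  refine iSup_le fun s => iSup₂_le fun I hI => iSup_le fun hlen => ?_
  have hratio : ∀ k : ℕ, 1 ≤ k → k ≤ s → (k : ℝ) ^ (1 / p) ≤ C * ∑ i ∈ range k, 1 / Lam i :=
    fun k hk hks => rpow_le_mul_recipSum_of_maxRatio_le hLpos hC hk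
      ((Nat.cast_le.2 hks).trans (hI.card_le hx hlen))
  obtain ⟨σ, hσ⟩ := exists_perm_lp_le_mul_sum hp hratio
    (a := fun k => |f (I k).2 - f (I k).1|) fun _ => abs_nonneg _
  rw [← ENNReal.ofReal_toReal hf.ne, ← ENNReal.ofReal_coe_nnreal (p := C),
    ← ENNReal.ofReal_mul C.coe_nonneg]
  refine ENNReal.ofReal_le_ofReal (hσ.trans (mul_le_mul_of_nonneg_left ?_ C.coe_nonneg))
  simpa only [mul_one_div, Function.comp_apply] using
    (hI.comp_injective σ.injective).sum_abs_sub_div_le hf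

lemma iSup_lt_top_of_eventually_le {u : ℕ → ℝ≥0∞} (hu : ∀ n, u n < ⊤) {B : ℝ≥0∞} (hB : B < ⊤)
    (hle : ∀ᶠ n in atTop, u n ≤ B) : ⨆ n, u n < ⊤ := by
  obtain ⟨N, hN⟩ := eventually_atTop.1 hle
  refine lt_of_le_of_lt (b := B + ∑ n ∈ range N, u n) (iSup_le fun n => ?_)
    (ENNReal.add_lt_top.2 ⟨hB, ENNReal.sum_lt_top.2 fun n _ => hu n⟩)
  rcases le_or_gt N n with hn | hn
  · exact le_add_right (hN n hn)
  · exact le_add_left (Finset.single_le_sum_of_canonicallyOrdered (Finset.mem_range.2 hn))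

theorem wienerVar_lt_top_of_limsup_maxRatio_lt_top {q δ : ℕ → ℝ} (hLpos : ∀ i, 0 < Lam i)
    (hqpos : ∀ n, 0 < q n) (hq : ∀ᶠ n in atTop, 1 ≤ q n) (hδ : ∀ n, 0 < δ n)
    (hlim : limsup (fun n => maxRatio Lam (q n) (δ n)) atTop < ⊤) (hf : lamVar Lam f < ⊤) :
    wienerVar q δ f < ⊤ := by
  obtain ⟨C, hlimC, hC⟩ := ENNReal.lt_iff_exists_nnreal_btwn.1 hlim
  rw [wienerVar_eq_iSup]
  refine iSup_lt_top_of_eventually_le (fun n => wienerVarAt_lt_top (hLpos 0) hf (hqpos n) (hδ n))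
    (ENNReal.mul_lt_top hC hf) ?_
  filter_upwards [eventually_lt_of_limsup_lt hlimC, hq] with n hn hqn
  exact wienerVarAt_le_mul_lamVar hLpos hf hqn (hδ n) hn.le

end Sufficiency

/-! ### Necessity -/

lemma lamVar_le_of_sum_div_le {Lam : ℕ → ℝ} (hLpos : ∀ i, 0 < Lam i) {g : ℝ → ℝ}
    (hg : ∀ x, 0 ≤ g x) {B : ℝ}
    (hB : ∀ (s : ℕ) (x : Fin s → ℝ), Function.Injective x → ∑ i, g (x i) / Lam i ≤ B) :
    lamVar Lam g ≤ ENNReal.ofReal (B + B) := by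
  refine iSup_le fun s => iSup₂_le fun I hI => ENNReal.ofReal_le_ofReal ?_
  calc ∑ i, |g (I i).2 - g (I i).1| / Lam i
      ≤ ∑ i, (g (I i).2 / Lam i + g (I i).1 / Lam i) := by
        refine Finset.sum_le_sum fun i _ => ?_
        rw [← add_div]
        refine div_le_div_of_nonneg_right (abs_le.2 ⟨?_, ?_⟩) (hLpos i).le <;>
          linarith [hg (I i).1, hg (I i).2]
    _ ≤ B + B := by
        rw [Finset.sum_add_distrib]
        exact add_le_add (hB s _ hI.injective_snd) (hB s _ hI.injective_fst)

/-- The sum of spikes `∑_j h_j 1_{S_j}`. With `S_j` the `m_j` points `i / m_j` it is the extremal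
function for the necessity of the criterion. -/
noncomputable def spikeSum (S : ℕ → Finset ℝ) (h : ℕ → ℝ) (x : ℝ) : ℝ :=
  ∑' j, (S j : Set ℝ).indicator (fun _ => h j) x

section SpikeSum

variable {S : ℕ → Finset ℝ} {h : ℕ → ℝ}

lemma summable_spikeSum (hh : ∀ j, 0 ≤ h j) (hs : Summable h) (x : ℝ) :
    Summable fun j => (S j : Set ℝ).indicator (fun _ => h j) x :=
  .of_nonneg_of_le (fun j => Set.indicator_nonneg (fun _ _ => hh j) x)
    (fun j => Set.indicator_le_self' (fun _ _ => hh j) x) hs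

lemma spikeSum_nonneg (hh : ∀ j, 0 ≤ h j) (x : ℝ) : 0 ≤ spikeSum S h x :=
  tsum_nonneg fun j => Set.indicator_nonneg (fun _ _ => hh j) x

lemma le_spikeSum (hh : ∀ j, 0 ≤ h j) (hs : Summable h) {j : ℕ} {x : ℝ} (hx : x ∈ S j) :
    h j ≤ spikeSum S h x := by
  have hle := (summable_spikeSum (S := S) hh hs x).le_tsum j
    fun l _ => Set.indicator_nonneg (fun _ _ => hh l) x
  rwa [Set.indicator_of_mem (Finset.mem_coe.2 hx)] at hle

lemma spikeSum_eq_zero {x : ℝ} (hx : ∀ j, x ∉ S j) : spikeSum S h x = 0 := by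
  simp [spikeSum, hx]

variable {Lam : ℕ → ℝ}

lemma sum_indicator_div_le (hLpos : ∀ i, 0 < Lam i) (hLmono : Monotone Lam) (A : Finset ℝ) {c : ℝ}
    (hc : 0 ≤ c) {s : ℕ} {x : Fin s → ℝ} (hx : Function.Injective x) :
    ∑ i, (A : Set ℝ).indicator (fun _ => c) (x i) / Lam i ≤ c * recipSum Lam A.card := by
  classical
  set T := (Finset.univ.filter fun i => x i ∈ A).map Fin.valEmbedding
  have hT : T.card ≤ A.card := by
    rw [Finset.card_map]
    exact Finset.card_le_card_of_injOn x (fun i hi => by simpa using hi) hx.injOn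
  calc ∑ i, (A : Set ℝ).indicator (fun _ => c) (x i) / Lam i = c * ∑ i ∈ T, 1 / Lam i := by
        simp [T, Finset.sum_filter, Finset.mul_sum, Set.indicator_apply, div_eq_mul_inv]
    _ ≤ c * recipSum Lam A.card := mul_le_mul_of_nonneg_left
        ((sum_one_div_le_recipSum_card hLpos hLmono T).trans (recipSum_mono hLpos hT)) hc

lemma sum_spikeSum_div_le (hLpos : ∀ i, 0 < Lam i) (hLmono : Monotone Lam) (hh : ∀ j, 0 ≤ h j)
    (hs : Summable h) (hsL : Summable fun j => h j * recipSum Lam (S j).card) {s : ℕ}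
    {x : Fin s → ℝ} (hx : Function.Injective x) :
    ∑ i, spikeSum S h (x i) / Lam i ≤ ∑' j, h j * recipSum Lam (S j).card := by
  have hsum (i : Fin s) :
      Summable fun j => (S j : Set ℝ).indicator (fun _ => h j) (x i) / Lam i :=
    (summable_spikeSum hh hs (x i)).div_const _
  simp only [spikeSum, ← tsum_div_const]
  rw [← Summable.tsum_finsetSum fun i _ => hsum i]
  exact Summable.tsum_le_tsum (fun j => sum_indicator_div_le hLpos hLmono (S j) (hh j) hx)
    (summable_sum fun i _ => hsum i) hsL

lemma lamVar_spikeSum_lt_top (hLpos : ∀ i, 0 < Lam i) (hLmono : Monotone Lam) (hh : ∀ j, 0 ≤ h j)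
    (hs : Summable h) (hsL : Summable fun j => h j * recipSum Lam (S j).card) :
    lamVar Lam (spikeSum S h) < ⊤ :=
  (lamVar_le_of_sum_div_le hLpos (spikeSum_nonneg hh)
    fun _ _ hx => sum_spikeSum_div_le hLpos hLmono hh hs hsL hx).trans_lt ENNReal.ofReal_lt_top

end SpikeSum

/-- The points `i / m` with `0 ≤ i < m`, at which the spikes are placed. -/
noncomputable def gridPoints (m : ℕ) : Finset ℝ :=
  (range m).image fun i : ℕ => (i : ℝ) / m

lemma card_gridPoints (m : ℕ) : (gridPoints m).card = m := by
  rcases m.eq_zero_or_pos with rfl | hm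
  · rfl
  · have hm' : (m : ℝ) ≠ 0 := by positivity
    rw [gridPoints, Finset.card_image_of_injective _ fun i j hij => ?_, Finset.card_range]
    exact_mod_cast (div_left_inj' hm').1 hij

lemma notMem_gridPoints_of_irrational {x : ℝ} (hx : Irrational x) (m : ℕ) : x ∉ gridPoints m := by
  simp only [gridPoints, Finset.mem_image, not_exists, not_and]
  rintro i - rfl
  exact hx ⟨i / m, by push_cast; rfl⟩

lemma exists_nonoverlapping_gridPoints_irrational {m : ℕ} {x : ℝ} (hmx : (m : ℝ) < x) :
    ∃ I : Fin m → ℝ × ℝ, Nonoverlapping m I ∧ (∀ k, 1 / x ≤ (I k).2 - (I k).1) ∧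
      ∀ k, (I k).1 ∈ gridPoints m ∧ Irrational (I k).2 := by
  rcases m.eq_zero_or_pos with rfl | hm
  · exact ⟨Fin.elim0, ⟨fun i => i.elim0, fun i => i.elim0⟩, fun k => k.elim0, fun k => k.elim0⟩
  have hm' : (0 : ℝ) < m := by exact_mod_cast hm
  have hgap (k : Fin m) : (k : ℝ) / m + 1 / x < (k + 1 : ℝ) / m := by
    rw [add_div]
    gcongr
  choose y hy hlt hgt using fun k : Fin m => exists_irrational_btwn (hgap k)
  have hnext {i j : Fin m} (hij : i < j) : y i ≤ (j : ℝ) / m := by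
    refine (hgt i).le.trans ?_
    gcongr
    exact_mod_cast hij
  refine ⟨fun k => ((k : ℝ) / m, y k), ⟨fun k => ⟨by positivity, ?_, ?_⟩, fun i j hij => ?_⟩,
    fun k => ?_, fun k => ⟨?_, hy k⟩⟩
  · exact (le_add_of_nonneg_right (by have := hm'.trans hmx; positivity)).trans_lt (hlt k)
  · refine (hgt k).le.trans ((div_le_one hm').2 ?_)
    exact_mod_cast k.2
  · exact hij.lt_or_gt.imp hnext hnext
  · linarith [hlt k]
  · exact Finset.mem_image_of_mem _ (Finset.mem_range.2 k.2)

lemma ofReal_le_wienerVarAt_of_gridPoints {p x c : ℝ} {m : ℕ} {g : ℝ → ℝ} (hp : 0 < p)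
    (hmx : (m : ℝ) < x) (hc : 0 ≤ c) (hgrid : ∀ t ∈ gridPoints m, c ≤ g t)
    (hirr : ∀ t, Irrational t → g t = 0) :
    ENNReal.ofReal ((m : ℝ) ^ (1 / p) * c) ≤ wienerVarAt p x g := by
  obtain ⟨I, hI, hlen, hends⟩ := exists_nonoverlapping_gridPoints_irrational hmx
  refine le_iSup_of_le m <| le_iSup₂_of_le I hI <| le_iSup_of_le hlen <|
    ENNReal.ofReal_le_ofReal ?_
  calc (m : ℝ) ^ (1 / p) * c = (∑ _k : Fin m, c ^ p) ^ (1 / p) := by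
        rw [sum_const_rpow_rpow_one_div hp.ne' hc, Fintype.card_fin]
    _ ≤ (∑ k, |g (I k).2 - g (I k).1| ^ p) ^ (1 / p) := by
        gcongr with k
        rw [hirr _ (hends k).2, zero_sub, abs_neg]
        exact (hgrid _ (hends k).1).trans (le_abs_self _)

/-- The height `h_j = 2⁻ʲ / ∑_{i ≤ m_j} 1/λ_i` makes the `Λ`-variation of the `j`-th spikes at most
`2 * 2⁻ʲ`, while their `q(n_j)`-variation is at least `4ʲ * 2⁻ʲ = 2ʲ`. -/
lemma exists_lamVar_lt_top_wienerVar_eq_top {Lam q δ : ℕ → ℝ} (hLpos : ∀ i, 0 < Lam i)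
    (hLmono : Monotone Lam) (hqpos : ∀ n, 0 < q n)
    (hunb : ∀ M : ℝ, 0 ≤ M → ∃ n m : ℕ, 1 ≤ m ∧ (m : ℝ) < δ n ∧
      M * recipSum Lam m ≤ (m : ℝ) ^ (1 / q n)) :
    ∃ f : ℝ → ℝ, lamVar Lam f < ⊤ ∧ wienerVar q δ f = ⊤ := by
  choose n m hm hmδ hM using fun j : ℕ => hunb (4 ^ j) (by positivity)
  have hL (j : ℕ) : 0 < recipSum Lam (m j) := recipSum_pos hLpos (hm j)
  set h : ℕ → ℝ := fun j => (1 / 2) ^ j / recipSum Lam (m j)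
  have hh (j : ℕ) : 0 ≤ h j := div_nonneg (by positivity) (hL j).le
  have hmul (j : ℕ) : h j * recipSum Lam (m j) = (1 / 2) ^ j := div_mul_cancel₀ _ (hL j).ne'
  have hs : Summable h := by
    refine .of_nonneg_of_le hh (fun j => ?_) (summable_geometric_two.mul_left (Lam 0))
    calc h j ≤ h j * (Lam 0 * recipSum Lam (m j)) :=
          le_mul_of_one_le_right (hh j) (one_le_mul_recipSum hLpos (hm j))
      _ = Lam 0 * (1 / 2) ^ j := by rw [← hmul j]; ring
  have hsL : Summable fun j => h j * recipSum Lam (gridPoints (m j)).card := by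
    simpa only [card_gridPoints, hmul] using summable_geometric_two
  set f := spikeSum (fun j => gridPoints (m j)) h
  have hlarge (j : ℕ) : ENNReal.ofReal (2 ^ j) ≤ wienerVar q δ f :=
    calc ENNReal.ofReal (2 ^ j) ≤ ENNReal.ofReal ((m j : ℝ) ^ (1 / q (n j)) * h j) := by
          refine ENNReal.ofReal_le_ofReal ?_
          calc (2 : ℝ) ^ j = 4 ^ j * (1 / 2) ^ j := by rw [← mul_pow]; norm_num
            _ = 4 ^ j * recipSum Lam (m j) * h j := by rw [← hmul j]; ring
            _ ≤ (m j : ℝ) ^ (1 / q (n j)) * h j := mul_le_mul_of_nonneg_right (hM j) (hh j)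
      _ ≤ wienerVarAt (q (n j)) (δ (n j)) f :=
          ofReal_le_wienerVarAt_of_gridPoints (hqpos _) (hmδ j) (hh j)
            (fun t ht => le_spikeSum hh hs ht)
            fun t ht => spikeSum_eq_zero fun l => notMem_gridPoints_of_irrational ht (m l)
      _ ≤ wienerVar q δ f := le_iSup (fun n => wienerVarAt (q n) (δ n) f) (n j)
  refine ⟨f, lamVar_spikeSum_lt_top hLpos hLmono hh hs hsL, ?_⟩
  have htop : Tendsto (fun j : ℕ => ENNReal.ofReal (2 ^ j)) atTop (nhds ⊤) :=
    ENNReal.tendsto_ofReal_atTop.comp (tendsto_pow_atTop_atTop_of_one_lt one_lt_two)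
  exact top_unique (le_of_tendsto' htop hlarge)

theorem limsup_maxRatio_lt_top_of_forall_wienerVar_lt_top {Lam q δ : ℕ → ℝ}
    (hLpos : ∀ i, 0 < Lam i) (hLmono : Monotone Lam) (hqpos : ∀ n, 0 < q n)
    (hq : ∀ᶠ n in atTop, 1 ≤ q n)
    (hincl : ∀ f : ℝ → ℝ, lamVar Lam f < ⊤ → wienerVar q δ f < ⊤) :
    limsup (fun n => maxRatio Lam (q n) (δ n)) atTop < ⊤ := by
  by_contra hlim
  obtain ⟨f, hfΛ, hfW⟩ := exists_lamVar_lt_top_wienerVar_eq_top (δ := δ) hLpos hLmono hqpos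
    fun M hM => by
      have hfreq : ∃ᶠ n in atTop,
          ENNReal.ofReal (max (2 * M) (Lam 0)) < maxRatio Lam (q n) (δ n) :=
        frequently_lt_of_lt_limsup (h := ENNReal.ofReal_lt_top.trans_le (not_lt.1 hlim))
      obtain ⟨n, hn, hqn⟩ := (hfreq.and_eventually hq).exists
      exact ⟨n, exists_mul_recipSum_le_rpow_of_lt_maxRatio hLpos hqn hM hn⟩
  exact (hincl f hfΛ).ne hfW

theorem goginava_general {Lam q δ : ℕ → ℝ} (hLpos : ∀ i, 0 < Lam i) (hLmono : Monotone Lam)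
    (hqpos : ∀ n, 0 < q n) (hq : ∀ᶠ n in atTop, 1 ≤ q n) (hδ : ∀ n, 0 < δ n) :
    (∀ f : ℝ → ℝ, lamVar Lam f < ⊤ → wienerVar q δ f < ⊤) ↔
      limsup (fun n => maxRatio Lam (q n) (δ n)) atTop < ⊤ :=
  ⟨limsup_maxRatio_lt_top_of_forall_wienerVar_lt_top hLpos hLmono hqpos hq,
    fun hlim _ => wienerVar_lt_top_of_limsup_maxRatio_lt_top hLpos hqpos hq hδ hlim⟩

/-- **Goginava's theorem.** If `q` is an increasing positive sequence with `q(n) → ∞` and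
`δ(n) = 2^n`, then `ΛBV ⊆ BV(q;δ)` if and only if
`limsup_{n→∞} max_{1 ≤ k ≤ 2^n} k^{1/q(n)} / (∑_{i=1}^k 1/λ_i) < ∞`. -/
theorem goginava
    (Lam q : ℕ → ℝ)
    (hLpos : ∀ i, 0 < Lam i) (hLmono : Monotone Lam)
    (hLdiv : Tendsto (fun n => ∑ i ∈ Finset.range n, 1 / Lam i) atTop atTop)
    (hqpos : ∀ n, 0 < q n) (hq : StrictMono q)
    (hqtop : Tendsto q atTop atTop) :
    (∀ f : ℝ → ℝ, lamVar Lam f < ⊤ →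
        wienerVar q (fun n => (2 : ℝ) ^ n) f < ⊤) ↔
      Filter.limsup (fun n =>
        ⨆ (k : ℕ) (_ : 1 ≤ k) (_ : k ≤ 2 ^ n),
          ENNReal.ofReal ((k : ℝ) ^ (1 / q n) /
            ∑ i ∈ Finset.range k, 1 / Lam i)) atTop < ⊤ := by
  have key := goginava_general (δ := fun n => (2 : ℝ) ^ n) hLpos hLmono hqpos
    (hqtop.eventually_ge_atTop 1) fun n => by positivity
  simpa only [maxRatio, recipSum, ← Nat.cast_ofNat (R := ℝ), ← Nat.cast_pow, Nat.cast_le] using key
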